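/- If Z ⊆ X is T-invariant and compact, then the three dimensional entropies coincide: h^B(Z) = h^P(Z) = h^U(Z). -/

import Mathlib

open Filter Set
open scoped ENNReal NNReal

namespace BowenProduct

variable {X : Type*} [PseudoMetricSpace X]

/-- The open Bowen ball of order `n` and radius `ε` around `x`:
the ball for the `n`-th Bowen metric `d_n(x,y) = max_{0 ≤ k ≤ n-1} d(T^k x, T^k y)`. -/
def bowenBall (T : X → X) (n : ℕ) (x : X) (ε : ℝ) : Set X :=
  {y | ∀ k < n, dist (T^[k] x) (T^[k] y) < ε}

/-- The closed Bowen ball of order `n` and radius `ε` around `x`. -/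
def bowenClosedBall (T : X → X) (n : ℕ) (x : X) (ε : ℝ) : Set X :=
  {y | ∀ k < n, dist (T^[k] x) (T^[k] y) ≤ ε}

/-- `M^s_{N,ε}(Z)`: the infimum of `Σ_i exp(-s n_i)` over all finite or countable families
`{B_{n_i}(x_i, ε)}` with `x_i ∈ X`, `n_i ≥ N`, covering `Z`. -/
noncomputable def coverSum (T : X → X) (s : ℝ) (N : ℕ) (ε : ℝ) (Z : Set X) : ℝ≥0∞ :=
  ⨅ (F : Set (X × ℕ)) (_ : F.Countable) (_ : ∀ p ∈ F, N ≤ p.2)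
    (_ : Z ⊆ ⋃ p ∈ F, bowenBall T p.2 p.1 ε),
    ∑' p : F, ENNReal.ofReal (Real.exp (-s * ((p : X × ℕ).2 : ℝ)))

/-- `M^s_ε(Z) = lim_{N → ∞} M^s_{N,ε}(Z)`; the limit exists and equals the supremum
since `M^s_{N,ε}(Z)` does not decrease as `N` increases. -/
noncomputable def coverMeasureEps (T : X → X) (s ε : ℝ) (Z : Set X) : ℝ≥0∞ :=
  ⨆ N : ℕ, coverSum T s N ε Z

/-- `M^s(Z) = lim_{ε → 0} M^s_ε(Z)`; the limit exists and equals the supremum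
since `M^s_ε(Z)` does not decrease as `ε` decreases. -/
noncomputable def coverMeasure (T : X → X) (s : ℝ) (Z : Set X) : ℝ≥0∞ :=
  ⨆ (ε : ℝ) (_ : 0 < ε), coverMeasureEps T s ε Z

/-- Bowen's topological entropy `h^B(Z)`: the critical value of `s ≥ 0` at which
`M^s(Z)` jumps from `∞` to `0`, i.e. `inf {s ≥ 0 : M^s(Z) = 0}` (and `∞` if no such `s`). -/
noncomputable def bowenEntropy (T : X → X) (Z : Set X) : ℝ≥0∞ :=
  ⨅ (s : ℝ≥0) (_ : coverMeasure T (s : ℝ) Z = 0), (s : ℝ≥0∞)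

/-- `P^s_{N,ε}(Z)`: the supremum of `Σ_i exp(-s n_i)` over all finite or countable pairwise
disjoint families `{B̄_{n_i}(x_i, ε)}` with `x_i ∈ Z`, `n_i ≥ N`. -/
noncomputable def packingSum (T : X → X) (s : ℝ) (N : ℕ) (ε : ℝ) (Z : Set X) : ℝ≥0∞ :=
  ⨆ (F : Set (X × ℕ)) (_ : F.Countable) (_ : ∀ p ∈ F, p.1 ∈ Z ∧ N ≤ p.2)
    (_ : F.PairwiseDisjoint fun p => bowenClosedBall T p.2 p.1 ε),
    ∑' p : F, ENNReal.ofReal (Real.exp (-s * ((p : X × ℕ).2 : ℝ)))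

/-- `P^s_ε(Z) = lim_{N → ∞} P^s_{N,ε}(Z)`; the limit exists and equals the infimum
since `P^s_{N,ε}(Z)` does not increase as `N` increases. -/
noncomputable def packingPre (T : X → X) (s ε : ℝ) (Z : Set X) : ℝ≥0∞ :=
  ⨅ N : ℕ, packingSum T s N ε Z

/-- `𝒫^s_ε(Z) = inf { Σ_{i=1}^∞ P^s_ε(Z_i) : ∪_{i=1}^∞ Z_i ⊇ Z }`. -/
noncomputable def packingMeasureEps (T : X → X) (s ε : ℝ) (Z : Set X) : ℝ≥0∞ :=
  ⨅ (Zs : ℕ → Set X) (_ : Z ⊆ ⋃ i, Zs i), ∑' i, packingPre T s ε (Zs i)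

/-- `h^P(Z, ε)`: the critical value of `s ≥ 0` at which `𝒫^s_ε(Z)` jumps from `∞` to `0`. -/
noncomputable def packingEntropyEps (T : X → X) (ε : ℝ) (Z : Set X) : ℝ≥0∞ :=
  ⨅ (s : ℝ≥0) (_ : packingMeasureEps T (s : ℝ) ε Z = 0), (s : ℝ≥0∞)

/-- The packing topological entropy `h^P(Z) = lim_{ε → 0} h^P(Z, ε)`; the limit exists and
equals the supremum since `h^P(Z,ε)` increases as `ε` decreases. -/
noncomputable def packingEntropy (T : X → X) (Z : Set X) : ℝ≥0∞ :=
  ⨆ (ε : ℝ) (_ : 0 < ε), packingEntropyEps T ε Z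

/-- `r_n(Z, ε)`: the largest cardinality of an `(n,ε)`-separated subset `E ⊆ Z`, i.e. a set in
which distinct points are at Bowen `d_n`-distance `> ε`. -/
noncomputable def maxSep (T : X → X) (Z : Set X) (n : ℕ) (ε : ℝ) : ℕ :=
  sSup {k : ℕ | ∃ E : Finset X, ↑E ⊆ Z ∧
    (∀ x ∈ E, ∀ y ∈ E, x ≠ y → ∃ i < n, ε < dist (T^[i] x) (T^[i] y)) ∧ E.card = k}

/-- The upper capacity topological entropy
`h^U(Z) = lim_{ε → 0} limsup_{n → ∞} (1/n) log r_n(Z, ε)`; the limit over `ε` equals the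
supremum by monotonicity. -/
noncomputable def upperCapacityEntropy (T : X → X) (Z : Set X) : ℝ≥0∞ :=
  ⨆ (ε : ℝ) (_ : 0 < ε),
    Filter.atTop.limsup fun n : ℕ => ENNReal.ofReal (Real.log (maxSep T Z n ε) / n)

end BowenProduct

/-!
The entropies satisfy the cycle `h^B ≤ h^P ≤ h^U ≤ h^B`.

* `h^B ≤ h^P`: the closed balls of a maximal disjoint family of order `n` and radius `ε` become a
  cover by Bowen balls of order `n` once the radius is tripled, so `M^s_{n,3ε} ≤ P^s_{n,ε}`.
* `h^P ≤ h^U`: centres of disjoint closed balls of a common order are separated. Sorting a packing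
  by order therefore bounds it by `∑_{n ≥ N} r_n(Z, ε) e^{-sn}`, the tail of a convergent series
  as soon as `s` exceeds the growth rate of `r_n(Z, ε)`.
* `h^U ≤ h^B`: if `M^s(Z) = 0`, compactness gives a finite cover of `Z` by balls
  `B_{m_i}(x_i, ε/2)` with `m_i ≥ 1` and `∑ e^{-s m_i} ≤ 1`. Applying `T^{m_i}` to the part of an
  `(n, ε)`-separated set inside the `i`-th ball produces an `(n - m_i, ε)`-separated set, again in
  `Z` by invariance. Hence `r_n ≤ ∑ r_{n - m_i}`, and by induction `r_n = O(e^{sn})`.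
-/

open scoped Topology

namespace BowenProduct

theorem ennreal_le_of_forall_lt_coe {a b : ℝ≥0∞} (h : ∀ s : ℝ≥0, b < s → a ≤ s) : a ≤ b := by
  refine le_of_forall_gt_imp_ge_of_dense fun c hc => ?_
  obtain ⟨s, hbs, hsc⟩ := ENNReal.lt_iff_exists_nnreal_btwn.1 hc
  exact (h s hbs).trans hsc.le

section Growth

/-- The weight `e^{-sn}` which a Bowen ball of order `n` contributes to `M^s` and `P^s`. -/
noncomputable def weight (s : ℝ) (n : ℕ) : ℝ≥0∞ := ENNReal.ofReal (Real.exp (-s * n))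

theorem weight_ne_zero (s : ℝ) (n : ℕ) : weight s n ≠ 0 :=
  (ENNReal.ofReal_pos.2 (Real.exp_pos _)).ne'

theorem weight_anti {s t : ℝ} (hst : s ≤ t) (n : ℕ) : weight t n ≤ weight s n := by
  unfold weight
  gcongr

theorem weight_eq_pow (s : ℝ) (n : ℕ) : weight s n = ENNReal.ofReal (Real.exp (-s)) ^ n := by
  rw [weight, ← ENNReal.ofReal_pow (Real.exp_pos _).le, ← Real.exp_nat_mul, mul_comm]

theorem natCast_mul_weight_le {a n : ℕ} {t : ℝ} (ha : (a : ℝ) ≤ Real.exp (t * n)) (s : ℝ) :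
    a * weight s n ≤ weight (s - t) n := by
  rw [weight, weight, ← ENNReal.ofReal_natCast, ← ENNReal.ofReal_mul a.cast_nonneg]
  refine ENNReal.ofReal_le_ofReal ?_
  calc a * Real.exp (-s * n) ≤ Real.exp (t * n) * Real.exp (-s * n) := by gcongr
    _ = Real.exp (-(s - t) * n) := by rw [← Real.exp_add]; ring_nf

theorem tsum_weight_ne_top {s : ℝ} (hs : 0 < s) : ∑' n, weight s n ≠ ∞ := by
  have hlt : ENNReal.ofReal (Real.exp (-s)) < 1 :=
    ENNReal.ofReal_lt_one.2 (Real.exp_lt_one_iff.2 (neg_lt_zero.2 hs))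
  simp only [weight_eq_pow, ENNReal.tsum_geometric]
  exact ENNReal.inv_ne_top.2 (tsub_pos_of_lt hlt).ne'

theorem tsum_weight_of_forall_snd_eq {ι : Type*} {F : Set (ι × ℕ)} {n : ℕ}
    (hF : ∀ p ∈ F, p.2 = n) (s : ℝ) :
    ∑' p : F, weight s p.1.2 = (Prod.fst '' F).encard * weight s n := by
  have hinj : InjOn Prod.fst F := fun p hp q hq h => Prod.ext h ((hF p hp).trans (hF q hq).symm)
  rw [hinj.encard_image, ← ENNReal.tsum_set_const]
  exact tsum_congr fun p => by rw [hF p p.2]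

theorem tsum_weight_image_mk {ι : Type*} (E : Set ι) (n : ℕ) (s : ℝ) :
    ∑' p : (fun x => (x, n)) '' E, weight s p.1.2 = E.encard * weight s n := by
  have hsnd : ∀ p ∈ (fun x => (x, n)) '' E, p.2 = n := forall_mem_image.2 fun _ _ => rfl
  rw [tsum_weight_of_forall_snd_eq hsnd, image_image, image_id']

/-- The upper exponential growth rate `limsup (1/n) log u_n` of a sequence of natural numbers,
truncated below at `0`. It is used for `u_n = r_n(Z, ε)`; vanishing terms count as rate `0`. -/
noncomputable def expGrowthRate (u : ℕ → ℕ) : ℝ≥0∞ :=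
  atTop.limsup fun n : ℕ => ENNReal.ofReal (Real.log (u n) / n)

theorem eventually_le_exp_of_expGrowthRate_lt {u : ℕ → ℕ} {t : ℝ≥0}
    (h : expGrowthRate u < t) : ∀ᶠ n : ℕ in atTop, (u n : ℝ) ≤ Real.exp (t * n) := by
  filter_upwards [eventually_lt_of_limsup_lt h, eventually_gt_atTop 0] with n hn hn0
  rcases (u n).eq_zero_or_pos with hu | hu
  · rw [hu, Nat.cast_zero]
    exact (Real.exp_pos _).le
  rw [← ENNReal.ofReal_coe_nnreal] at hn
  have hlog : Real.log (u n) / n ≤ t := (ENNReal.ofReal_le_ofReal_iff t.2).1 hn.le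
  rwa [div_le_iff₀ (Nat.cast_pos.2 hn0), Real.log_le_iff_le_exp (Nat.cast_pos.2 hu)] at hlog

theorem expGrowthRate_le_of_eventually_le_exp {u : ℕ → ℕ} {s : ℝ≥0} {c : ℝ}
    (h : ∀ᶠ n : ℕ in atTop, (u n : ℝ) ≤ Real.exp (s * n + c)) : expGrowthRate u ≤ s := by
  have hlim : Tendsto (fun n : ℕ => ENNReal.ofReal (s + c / n)) atTop (𝓝 s) := by
    rw [← ENNReal.ofReal_coe_nnreal]
    refine ENNReal.tendsto_ofReal ?_
    simpa only [add_zero] using (tendsto_const_div_atTop_nhds_zero_nat c).const_add (s : ℝ)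
  refine le_trans (limsup_le_limsup ?_) hlim.limsup_eq.le
  filter_upwards [h, eventually_gt_atTop 0] with n hn hn0
  rcases (u n).eq_zero_or_pos with hu | hu
  · simp [hu]
  have hn0' : (0 : ℝ) < n := Nat.cast_pos.2 hn0
  refine ENNReal.ofReal_le_ofReal ?_
  rw [div_le_iff₀ hn0', add_mul, div_mul_cancel₀ _ hn0'.ne']
  exact (Real.log_le_iff_le_exp (Nat.cast_pos.2 hu)).2 hn

end Growth

variable {X : Type*} [PseudoMetricSpace X] {T : X → X} {Z : Set X} {s t ε : ℝ} {m n N : ℕ}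

section BowenBall

theorem mem_bowenBall_self (hε : 0 < ε) (x : X) : x ∈ bowenBall T n x ε :=
  fun k _ => by rwa [dist_self]

theorem mem_bowenClosedBall_self (hε : 0 ≤ ε) (x : X) : x ∈ bowenClosedBall T n x ε :=
  fun k _ => by rwa [dist_self]

theorem dist_iterate_lt_of_mem_bowenBall {x y z : X} (hy : y ∈ bowenBall T n x (ε / 2))
    (hz : z ∈ bowenBall T n x (ε / 2)) {k : ℕ} (hk : k < n) :
    dist (T^[k] y) (T^[k] z) < ε :=
  calc dist (T^[k] y) (T^[k] z) ≤ dist (T^[k] x) (T^[k] y) + dist (T^[k] x) (T^[k] z) :=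
        dist_triangle_left _ _ _
    _ < ε / 2 + ε / 2 := add_lt_add (hy k hk) (hz k hk)
    _ = ε := add_halves ε

theorem mem_bowenBall_of_inter_nonempty (hε : 0 < ε) {x z : X}
    (h : (bowenClosedBall T n z ε ∩ bowenClosedBall T n x ε).Nonempty) :
    z ∈ bowenBall T n x (3 * ε) := by
  obtain ⟨w, hzw, hxw⟩ := h
  intro k hk
  calc dist (T^[k] x) (T^[k] z) ≤ dist (T^[k] x) (T^[k] w) + dist (T^[k] z) (T^[k] w) :=
        dist_triangle_right _ _ _
    _ ≤ ε + ε := add_le_add (hxw k hk) (hzw k hk)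
    _ < 3 * ε := by linarith

theorem bowenBall_mem_nhdsWithin (hT : ContinuousOn T Z) (hinv : MapsTo T Z Z) {x y : X}
    (hy : y ∈ Z) (h : y ∈ bowenBall T n x ε) : bowenBall T n x ε ∈ 𝓝[Z] y := by
  have hball : bowenBall T n x ε = ⋂ k ∈ Iio n, {z | dist (T^[k] x) (T^[k] z) < ε} := by
    ext z
    simp only [bowenBall, mem_ofPred_eq, mem_iInter, mem_Iio]
  rw [hball, biInter_mem (finite_Iio n)]
  exact fun k hk => (continuousWithinAt_const.dist (hT.iterate hinv k y hy)).eventually_lt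
    continuousWithinAt_const (h k hk)

theorem exists_finset_bowenBall_subcover (hT : ContinuousOn T Z) (hinv : MapsTo T Z Z)
    (hZ : IsCompact Z) {F : Set (X × ℕ)} (hF : Z ⊆ ⋃ p ∈ F, bowenBall T p.2 p.1 ε) :
    ∃ F' : Finset (X × ℕ), ↑F' ⊆ F ∧ Z ⊆ ⋃ p ∈ F', bowenBall T p.2 p.1 ε := by
  classical
  have hcenter : ∀ z ∈ Z, ∃ p ∈ F, z ∈ bowenBall T p.2 p.1 ε := fun z hz => by
    simpa only [mem_iUnion, exists_prop] using hF hz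
  choose! c hcF hc using hcenter
  obtain ⟨t, htZ, ht⟩ := hZ.elim_nhdsWithin_subcover
    (fun z => bowenBall T (c z).2 (c z).1 ε)
    fun z hz => bowenBall_mem_nhdsWithin hT hinv hz (hc z hz)
  refine ⟨t.image c, ?_, ?_⟩
  · rw [Finset.coe_image, image_subset_iff]
    exact fun z hz => hcF z (htZ z hz)
  · rwa [Finset.set_biUnion_finset_image]

/-- Total boundedness of `Z` for every Bowen metric `d_n`. It makes the numbers `r_n(Z, ε)` finite,
so that the supremum defining `maxSep` is not a junk value. -/
def BowenTotallyBounded (T : X → X) (Z : Set X) : Prop :=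
  ∀ (n : ℕ) (ε : ℝ), 0 < ε → ∃ t : Finset X, Z ⊆ ⋃ x ∈ t, bowenBall T n x ε

theorem bowenTotallyBounded_of_isCompact (hT : ContinuousOn T Z) (hinv : MapsTo T Z Z)
    (hZ : IsCompact Z) : BowenTotallyBounded T Z := by
  classical
  intro n ε hε
  have hcover : Z ⊆ ⋃ p ∈ Z ×ˢ {n}, bowenBall T p.2 p.1 ε := fun z hz =>
    mem_biUnion (mk_mem_prod hz rfl : (z, n) ∈ Z ×ˢ {n}) (mem_bowenBall_self hε z)
  obtain ⟨F, hFZ, hF⟩ := exists_finset_bowenBall_subcover hT hinv hZ hcover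
  refine ⟨F.image Prod.fst, fun z hz => ?_⟩
  obtain ⟨⟨x, k⟩, hp, hzp⟩ := mem_iUnion₂.1 (hF hz)
  obtain rfl : k = n := (hFZ hp).2
  exact mem_biUnion (Finset.mem_coe.2 (Finset.mem_image_of_mem _ hp)) hzp

end BowenBall

section Separated

/-- A set is `(n, ε)`-separated if distinct points are at `d_n`-distance greater than `ε`; this is
the condition that occurs in `maxSep`. -/
def IsBowenSeparated (T : X → X) (n : ℕ) (ε : ℝ) (E : Set X) : Prop :=
  E.Pairwise fun x y => ∃ i < n, ε < dist (T^[i] x) (T^[i] y)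

theorem isBowenSeparated_of_pairwiseDisjoint (hε : 0 ≤ ε) {E : Set X}
    (h : E.PairwiseDisjoint fun x => bowenClosedBall T n x ε) : IsBowenSeparated T n ε E := by
  intro x hx y hy hxy
  by_contra! hclose
  exact disjoint_left.1 (h hx hy hxy) hclose (mem_bowenClosedBall_self hε y)

theorem IsBowenSeparated.subsingleton {E : Set X} (h : IsBowenSeparated T 0 ε E) :
    E.Subsingleton := by
  intro x hx y hy
  by_contra hxy
  obtain ⟨i, hi, -⟩ := h hx hy hxy
  exact Nat.not_lt_zero i hi

theorem IsBowenSeparated.exists_lt_dist_iterate {E : Set X} (h : IsBowenSeparated T n ε E) {c : X}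
    (hc : E ⊆ bowenBall T m c (ε / 2)) {x y : X} (hx : x ∈ E) (hy : y ∈ E) (hxy : x ≠ y) :
    ∃ j < n - m, ε < dist (T^[j] (T^[m] x)) (T^[j] (T^[m] y)) := by
  obtain ⟨i, hi, hlt⟩ := h hx hy hxy
  have hmi : m ≤ i := by
    by_contra! him
    exact hlt.not_gt (dist_iterate_lt_of_mem_bowenBall (hc hx) (hc hy) him)
  refine ⟨i - m, by omega, ?_⟩
  rwa [← Function.iterate_add_apply, ← Function.iterate_add_apply, Nat.sub_add_cancel hmi]

theorem IsBowenSeparated.injOn_iterate (hε : 0 ≤ ε) {E : Set X} (h : IsBowenSeparated T n ε E)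
    {c : X} (hc : E ⊆ bowenBall T m c (ε / 2)) : InjOn T^[m] E := by
  intro x hx y hy hTxy
  by_contra hxy
  obtain ⟨j, -, hlt⟩ := h.exists_lt_dist_iterate hc hx hy hxy
  rw [hTxy, dist_self] at hlt
  exact hε.not_gt hlt

theorem IsBowenSeparated.image_iterate {E : Set X} (h : IsBowenSeparated T n ε E) {c : X}
    (hc : E ⊆ bowenBall T m c (ε / 2)) : IsBowenSeparated T (n - m) ε (T^[m] '' E) := by
  rintro _ ⟨x, hx, rfl⟩ _ ⟨y, hy, rfl⟩ hTxy
  exact h.exists_lt_dist_iterate hc hx hy (ne_of_apply_ne _ hTxy)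

theorem IsBowenSeparated.card_le_of_subset_iUnion_bowenBall {E t : Finset X}
    (h : IsBowenSeparated T n ε E) (ht : ↑E ⊆ ⋃ x ∈ t, bowenBall T n x (ε / 2)) :
    E.card ≤ t.card := by
  have hcenter : ∀ y ∈ E, ∃ x ∈ t, y ∈ bowenBall T n x (ε / 2) := fun y hy => by
    simpa only [mem_iUnion, exists_prop] using ht hy
  choose! c hct hc using hcenter
  refine Finset.card_le_card_of_injOn c hct fun x hx y hy hxy => ?_
  by_contra hne
  obtain ⟨i, hi, hlt⟩ := h hx hy hne
  exact hlt.not_gt (dist_iterate_lt_of_mem_bowenBall (hc x hx) (hxy ▸ hc y hy) hi)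

theorem IsBowenSeparated.encard_le_maxSep (hZ : BowenTotallyBounded T Z) (hε : 0 < ε)
    {E : Set X} (h : IsBowenSeparated T n ε E) (hE : E ⊆ Z) : E.encard ≤ maxSep T Z n ε := by
  obtain ⟨t, ht⟩ := hZ n (ε / 2) (half_pos hε)
  have hfinset : ∀ E' : Finset X, ↑E' ⊆ E → E'.card ≤ maxSep T Z n ε := by
    refine fun E' hE' => le_csSup ⟨t.card, ?_⟩ ⟨E', hE'.trans hE, h.mono hE', rfl⟩
    rintro _ ⟨E'', hE'', hsep, rfl⟩
    exact IsBowenSeparated.card_le_of_subset_iUnion_bowenBall hsep (hE''.trans ht)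
  by_contra! hlt
  obtain ⟨E', hE'E, hcard⟩ := exists_subset_encard_eq (Order.add_one_le_of_lt hlt)
  have hfin : E'.Finite := finite_of_encard_eq_coe (k := maxSep T Z n ε + 1) (by simpa using hcard)
  lift E' to Finset X using hfin
  rw [encard_coe_eq_coe_finsetCard] at hcard
  have hcard' : E'.card = maxSep T Z n ε + 1 := by exact_mod_cast hcard
  exact (hfinset E' hE'E).not_gt (hcard' ▸ Nat.lt_succ_self _)

theorem maxSep_le_of_forall_card_le {b : ℝ}
    (h : ∀ E : Finset X, ↑E ⊆ Z → IsBowenSeparated T n ε E → (E.card : ℝ) ≤ b) :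
    (maxSep T Z n ε : ℝ) ≤ b := by
  have hb : 0 ≤ b := by simpa using h ∅ (by simp) (by simp [IsBowenSeparated])
  refine (Nat.le_floor_iff hb).1 (csSup_le ⟨0, ∅, by simp⟩ ?_)
  rintro _ ⟨E, hE, hsep, rfl⟩
  exact Nat.le_floor (h E hE hsep)

end Separated

section BowenLePacking

theorem coverSum_le_tsum_weight {F : Set (X × ℕ)} (hF : F.Countable) (hN : ∀ p ∈ F, N ≤ p.2)
    (hZ : Z ⊆ ⋃ p ∈ F, bowenBall T p.2 p.1 ε) :
    coverSum T s N ε Z ≤ ∑' p : F, weight s p.1.2 :=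
  (iInf₂_le F hF).trans (iInf₂_le hN hZ)

theorem exists_cover_of_coverSum_lt {a : ℝ≥0∞} (h : coverSum T s N ε Z < a) :
    ∃ F : Set (X × ℕ), F.Countable ∧ (∀ p ∈ F, N ≤ p.2) ∧
      (Z ⊆ ⋃ p ∈ F, bowenBall T p.2 p.1 ε) ∧ ∑' p : F, weight s p.1.2 < a := by
  simpa only [coverSum, iInf_lt_iff, exists_prop, weight] using h

theorem tsum_weight_le_packingSum {F : Set (X × ℕ)} (hF : F.Countable)
    (hFZ : ∀ p ∈ F, p.1 ∈ Z ∧ N ≤ p.2)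
    (hd : F.PairwiseDisjoint fun p => bowenClosedBall T p.2 p.1 ε) :
    ∑' p : F, weight s p.1.2 ≤ packingSum T s N ε Z :=
  le_iSup₂_of_le F hF (le_iSup₂_of_le hFZ hd le_rfl)

theorem monotone_coverSum : Monotone fun N => coverSum T s N ε Z := fun _ _ hNM =>
  le_iInf₂ fun _ hF => le_iInf₂ fun hM hZ =>
    coverSum_le_tsum_weight hF (fun p hp => hNM.trans (hM p hp)) hZ

theorem coverSum_le_of_exponent_le (hst : s ≤ t) : coverSum T t N ε Z ≤ coverSum T s N ε Z :=
  le_iInf₂ fun _ hF => le_iInf₂ fun hN hZ =>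
    (coverSum_le_tsum_weight hF hN hZ).trans (ENNReal.tsum_le_tsum fun _ => weight_anti hst _)

theorem antitone_packingSum : Antitone fun N => packingSum T s N ε Z := fun _ _ hNM =>
  iSup₂_le fun _ hF => iSup₂_le fun hFZ hd =>
    tsum_weight_le_packingSum hF (fun p hp => ⟨(hFZ p hp).1, hNM.trans (hFZ p hp).2⟩) hd

theorem coverSum_le_tsum {Zs : ℕ → Set X} (hZ : Z ⊆ ⋃ i, Zs i) :
    coverSum T s N ε Z ≤ ∑' i, coverSum T s N ε (Zs i) := by
  refine ENNReal.le_of_forall_pos_le_add fun δ hδ hfin => ?_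
  obtain ⟨δ', hδ'pos, hδ'⟩ :=
    ENNReal.exists_pos_sum_of_countable (ENNReal.coe_pos.2 hδ).ne' ℕ
  have hlt : ∀ i, coverSum T s N ε (Zs i) < coverSum T s N ε (Zs i) + δ' i := fun i =>
    ENNReal.lt_add_right (ENNReal.ne_top_of_tsum_ne_top hfin.ne i)
      (ENNReal.coe_pos.2 (hδ'pos i)).ne'
  choose F hF hN hcover hsum using fun i => exists_cover_of_coverSum_lt (hlt i)
  calc coverSum T s N ε Z ≤ ∑' p : ⋃ i, F i, weight s p.1.2 := by
        refine coverSum_le_tsum_weight (countable_iUnion hF) (fun p hp => ?_) ?_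
        · obtain ⟨i, hi⟩ := mem_iUnion.1 hp
          exact hN i p hi
        · rw [biUnion_iUnion]
          exact hZ.trans (iUnion_mono hcover)
    _ ≤ ∑' i, ∑' p : F i, weight s p.1.2 :=
        ENNReal.tsum_iUnion_le_tsum (fun p : X × ℕ => weight s p.2) F
    _ ≤ ∑' i, (coverSum T s N ε (Zs i) + δ' i) := ENNReal.tsum_le_tsum fun i => (hsum i).le
    _ = ∑' i, coverSum T s N ε (Zs i) + ∑' i, (δ' i : ℝ≥0∞) := ENNReal.tsum_add
    _ ≤ ∑' i, coverSum T s N ε (Zs i) + δ := by gcongr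

theorem coverSum_le_encard_mul_weight {E : Set X} (hZ : Z ⊆ ⋃ x ∈ E, bowenBall T n x ε) :
    coverSum T s n ε Z ≤ E.encard * weight s n := by
  by_cases hE : E.Countable
  · rw [← tsum_weight_image_mk]
    refine coverSum_le_tsum_weight (hE.image _) (forall_mem_image.2 fun _ _ => le_rfl) ?_
    rwa [biUnion_image]
  · have hinf : E.Infinite := fun hfin => hE hfin.countable
    rw [hinf.encard_eq, ENat.toENNReal_top, ENNReal.top_mul (weight_ne_zero s n)]
    exact le_top

theorem encard_mul_weight_le_packingSum {E : Set X} (hE : E ⊆ Z)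
    (hd : E.PairwiseDisjoint fun x => bowenClosedBall T n x ε) :
    E.encard * weight s n ≤ packingSum T s n ε Z := by
  obtain ⟨E', hE'E, hE', hcard⟩ : ∃ E' ⊆ E, E'.Countable ∧ E'.encard = E.encard := by
    rcases E.finite_or_infinite with hfin | hinf
    · exact ⟨E, Subset.rfl, hfin.countable, rfl⟩
    · obtain ⟨E', hE'E, hE', hinf'⟩ := hinf.exists_subset_countable_infinite
      exact ⟨E', hE'E, hE', hinf'.encard_eq.trans hinf.encard_eq.symm⟩
  rw [← hcard, ← tsum_weight_image_mk]
  refine tsum_weight_le_packingSum (hE'.image _)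
    (forall_mem_image.2 fun x hx => ⟨hE (hE'E hx), le_rfl⟩) ?_
  rintro _ ⟨x, hx, rfl⟩ _ ⟨y, hy, rfl⟩ hxy
  exact hd (hE'E hx) (hE'E hy) (ne_of_apply_ne (fun x => (x, n)) hxy)

theorem exists_pairwiseDisjoint_subset_iUnion_bowenBall (T : X → X) (Z : Set X) (n : ℕ)
    (hε : 0 < ε) :
    ∃ E ⊆ Z, (E.PairwiseDisjoint fun x => bowenClosedBall T n x ε) ∧
      Z ⊆ ⋃ x ∈ E, bowenBall T n x (3 * ε) := by
  obtain ⟨E, hEZ, hd, hmeet⟩ := Vitali.exists_disjoint_subfamily_covering_enlargement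
    (fun x => bowenClosedBall T n x ε) Z (fun _ => 0) 2 one_lt_two (fun _ _ => le_rfl) 0
    (fun _ _ => le_rfl) (fun x _ => ⟨x, mem_bowenClosedBall_self hε.le x⟩)
  refine ⟨E, hEZ, hd, fun z hz => ?_⟩
  obtain ⟨x, hx, hzx, -⟩ := hmeet z hz
  exact mem_biUnion hx (mem_bowenBall_of_inter_nonempty hε hzx)

theorem coverSum_le_packingSum (hε : 0 < ε) :
    coverSum T s n (3 * ε) Z ≤ packingSum T s n ε Z := by
  obtain ⟨E, hEZ, hd, hcover⟩ := exists_pairwiseDisjoint_subset_iUnion_bowenBall T Z n hε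
  exact (coverSum_le_encard_mul_weight hcover).trans (encard_mul_weight_le_packingSum hEZ hd)

theorem coverSum_le_packingPre (hε : 0 < ε) :
    coverSum T s N (3 * ε) Z ≤ packingPre T s ε Z :=
  le_iInf fun M =>
    calc coverSum T s N (3 * ε) Z ≤ coverSum T s (max N M) (3 * ε) Z :=
          monotone_coverSum (le_max_left N M)
      _ ≤ packingSum T s (max N M) ε Z := coverSum_le_packingSum hε
      _ ≤ packingSum T s M ε Z := antitone_packingSum (le_max_right N M)

theorem coverMeasureEps_le_packingMeasureEps (hε : 0 < ε) :
    coverMeasureEps T s (3 * ε) Z ≤ packingMeasureEps T s ε Z :=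
  iSup_le fun _ => le_iInf₂ fun _ hZs =>
    (coverSum_le_tsum hZs).trans (ENNReal.tsum_le_tsum fun _ => coverSum_le_packingPre hε)

theorem coverMeasureEps_eq_zero_of_packingEntropyEps_lt (hε : 0 < ε) {s : ℝ≥0}
    (h : packingEntropyEps T ε Z < s) : coverMeasureEps T s (3 * ε) Z = 0 := by
  obtain ⟨t, ht, hts⟩ : ∃ t : ℝ≥0, packingMeasureEps T t ε Z = 0 ∧ (t : ℝ≥0∞) < s := by
    simpa only [packingEntropyEps, iInf_lt_iff, exists_prop] using h
  have hts' : (t : ℝ) ≤ s := NNReal.coe_le_coe.2 (ENNReal.coe_lt_coe.1 hts).le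
  refine nonpos_iff_eq_zero.1 ?_
  calc coverMeasureEps T s (3 * ε) Z ≤ coverMeasureEps T t (3 * ε) Z :=
        iSup_mono fun _ => coverSum_le_of_exponent_le hts'
    _ ≤ packingMeasureEps T t ε Z := coverMeasureEps_le_packingMeasureEps hε
    _ = 0 := ht

theorem bowenEntropy_le_packingEntropy (T : X → X) (Z : Set X) :
    bowenEntropy T Z ≤ packingEntropy T Z := by
  refine ennreal_le_of_forall_lt_coe fun s hs => iInf₂_le s ?_
  refine nonpos_iff_eq_zero.1 (iSup₂_le fun ε hε => ?_)
  have hε3 : 0 < ε / 3 := by positivity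
  have hlt : packingEntropyEps T (ε / 3) Z < s :=
    (le_iSup₂ (f := fun ε (_ : 0 < ε) => packingEntropyEps T ε Z) _ hε3).trans_lt hs
  have hzero := coverMeasureEps_eq_zero_of_packingEntropyEps_lt hε3 hlt
  rw [mul_div_cancel₀ ε three_ne_zero] at hzero
  exact hzero.le

end BowenLePacking

section PackingLeUpperCapacity

theorem packingSum_le_tsum_maxSep (hZ : BowenTotallyBounded T Z) (hε : 0 < ε) :
    packingSum T s N ε Z ≤ ∑' k, maxSep T Z (k + N) ε * weight s (k + N) := by
  refine iSup₂_le fun F _ => iSup₂_le fun hFZ hd => ?_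
  let G : ℕ → Set (X × ℕ) := fun k => {p ∈ F | p.2 = k + N}
  have hFG : F ⊆ ⋃ k, G k := fun p hp =>
    mem_iUnion.2 ⟨p.2 - N, hp, (Nat.sub_add_cancel (hFZ p hp).2).symm⟩
  have hcard : ∀ k, (Prod.fst '' G k).encard ≤ maxSep T Z (k + N) ε := by
    intro k
    refine (isBowenSeparated_of_pairwiseDisjoint hε.le ?_).encard_le_maxSep hZ hε
      (image_subset_iff.2 fun p hp => (hFZ p hp.1).1)
    rintro _ ⟨p, hp, rfl⟩ _ ⟨q, hq, rfl⟩ hpq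
    simpa only [Function.onFun, hp.2, hq.2] using hd hp.1 hq.1 (ne_of_apply_ne _ hpq)
  calc ∑' p : F, weight s p.1.2 ≤ ∑' p : ⋃ k, G k, weight s p.1.2 :=
        ENNReal.tsum_mono_subtype (fun p : X × ℕ => weight s p.2) hFG
    _ ≤ ∑' k, ∑' p : G k, weight s p.1.2 :=
        ENNReal.tsum_iUnion_le_tsum (fun p : X × ℕ => weight s p.2) G
    _ = ∑' k, (Prod.fst '' G k).encard * weight s (k + N) :=
        tsum_congr fun k => tsum_weight_of_forall_snd_eq (fun p hp => hp.2) s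
    _ ≤ ∑' k, maxSep T Z (k + N) ε * weight s (k + N) := by
        refine ENNReal.tsum_le_tsum fun k => ?_
        gcongr
        exact_mod_cast ENat.toENNReal_le.2 (hcard k)

theorem packingPre_eq_zero_of_expGrowthRate_lt (hZ : BowenTotallyBounded T Z) (hε : 0 < ε)
    {s : ℝ≥0} (h : expGrowthRate (maxSep T Z · ε) < s) : packingPre T s ε Z = 0 := by
  obtain ⟨t, ht, hts⟩ := ENNReal.lt_iff_exists_nnreal_btwn.1 h
  have hst : (0 : ℝ) < s - t := sub_pos.2 (NNReal.coe_lt_coe.2 (ENNReal.coe_lt_coe.1 hts))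
  have htail : Tendsto (fun N => ∑' k, weight (s - t) (k + N)) atTop (𝓝 0) :=
    ENNReal.tendsto_sum_nat_add _ (tsum_weight_ne_top hst)
  refine nonpos_iff_eq_zero.1 (ge_of_tendsto htail ?_)
  filter_upwards [eventually_forall_ge_atTop.2 (eventually_le_exp_of_expGrowthRate_lt ht)]
    with N hN
  calc packingPre T s ε Z ≤ packingSum T s N ε Z := iInf_le _ N
    _ ≤ ∑' k, maxSep T Z (k + N) ε * weight s (k + N) := packingSum_le_tsum_maxSep hZ hε
    _ ≤ ∑' k, weight (s - t) (k + N) :=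
        ENNReal.tsum_le_tsum fun k => natCast_mul_weight_le (hN _ (Nat.le_add_left N k)) s

theorem packingPre_empty (T : X → X) (s ε : ℝ) : packingPre T s ε ∅ = 0 := by
  refine nonpos_iff_eq_zero.1 ((iInf_le _ 0).trans (iSup₂_le fun F _ => iSup₂_le fun hF _ => ?_))
  obtain rfl : F = ∅ := eq_empty_of_forall_notMem fun p hp => (hF p hp).1
  rw [tsum_empty]

theorem packingMeasureEps_le_packingPre : packingMeasureEps T s ε Z ≤ packingPre T s ε Z := by
  let Zs : ℕ → Set X := fun i => if i = 0 then Z else ∅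
  have hZs : Z ⊆ ⋃ i, Zs i := subset_iUnion Zs 0
  calc packingMeasureEps T s ε Z ≤ ∑' i, packingPre T s ε (Zs i) := iInf₂_le Zs hZs
    _ = packingPre T s ε (Zs 0) := tsum_eq_single 0 fun i hi => by
        simp only [Zs, if_neg hi, packingPre_empty]
    _ = packingPre T s ε Z := rfl

theorem packingEntropyEps_le_expGrowthRate (hZ : BowenTotallyBounded T Z) (hε : 0 < ε) :
    packingEntropyEps T ε Z ≤ expGrowthRate (maxSep T Z · ε) :=
  ennreal_le_of_forall_lt_coe fun s hs => iInf₂_le s <| nonpos_iff_eq_zero.1 <|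
    packingMeasureEps_le_packingPre.trans_eq (packingPre_eq_zero_of_expGrowthRate_lt hZ hε hs)

theorem packingEntropy_le_upperCapacityEntropy (hZ : BowenTotallyBounded T Z) :
    packingEntropy T Z ≤ upperCapacityEntropy T Z :=
  iSup₂_mono fun _ hε => packingEntropyEps_le_expGrowthRate hZ hε

end PackingLeUpperCapacity

section UpperCapacityLeBowen

theorem exists_finset_cover_of_coverMeasure_eq_zero (hT : ContinuousOn T Z)
    (hinv : MapsTo T Z Z) (hZ : IsCompact Z) (hs : coverMeasure T s Z = 0) (hε : 0 < ε) (N : ℕ) :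
    ∃ F : Finset (X × ℕ), (∀ p ∈ F, N ≤ p.2) ∧ (Z ⊆ ⋃ p ∈ F, bowenBall T p.2 p.1 ε) ∧
      ∑ p ∈ F, Real.exp (-s * p.2) ≤ 1 := by
  have hle : coverSum T s N ε Z ≤ coverMeasure T s Z :=
    le_iSup₂_of_le ε hε (le_iSup (fun N => coverSum T s N ε Z) N)
  obtain ⟨F, -, hN, hcover, hsum⟩ :=
    exists_cover_of_coverSum_lt ((hle.trans_eq hs).trans_lt one_pos)
  obtain ⟨F', hF'F, hF'⟩ := exists_finset_bowenBall_subcover hT hinv hZ hcover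
  refine ⟨F', fun p hp => hN p (hF'F hp), hF', ?_⟩
  rw [← ENNReal.ofReal_le_one, ENNReal.ofReal_sum_of_nonneg fun _ _ => (Real.exp_pos _).le]
  let w : X × ℕ → ℝ≥0∞ := fun p => weight s p.2
  calc ∑ p ∈ F', w p = ∑' p : (F' : Set (X × ℕ)), w p := (Finset.tsum_subtype F' w).symm
    _ ≤ ∑' p : F, w p := ENNReal.tsum_mono_subtype w hF'F
    _ ≤ 1 := hsum.le

theorem IsBowenSeparated.card_le_sum_of_cover (hinv : MapsTo T Z Z) (hε : 0 ≤ ε)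
    {F : Finset (X × ℕ)} (hF : Z ⊆ ⋃ p ∈ F, bowenBall T p.2 p.1 (ε / 2)) {b : X × ℕ → ℝ}
    (hb : ∀ p ∈ F, ∀ E : Finset X, ↑E ⊆ Z → IsBowenSeparated T (n - p.2) ε E → E.card ≤ b p)
    {E : Finset X} (hE : ↑E ⊆ Z) (h : IsBowenSeparated T n ε E) : E.card ≤ ∑ p ∈ F, b p := by
  classical
  let A : X × ℕ → Finset X := fun p => E.filter (· ∈ bowenBall T p.2 p.1 (ε / 2))
  have hcover : E ⊆ F.biUnion A := fun x hx => by
    obtain ⟨p, hp, hxp⟩ := mem_iUnion₂.1 (hF (hE hx))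
    exact Finset.mem_biUnion.2 ⟨p, hp, Finset.mem_filter.2 ⟨hx, hxp⟩⟩
  have hpiece : ∀ p ∈ F, ((A p).card : ℝ) ≤ b p := by
    intro p hp
    have hAE : (A p : Set X) ⊆ E := Finset.coe_subset.2 (Finset.filter_subset _ _)
    have hAp : ↑(A p) ⊆ bowenBall T p.2 p.1 (ε / 2) := fun x hx => (Finset.mem_filter.1 hx).2
    have hsep : IsBowenSeparated T n ε (A p) := h.mono hAE
    rw [← Finset.card_image_of_injOn (hsep.injOn_iterate hε hAp)]
    refine hb p hp _ ?_ ?_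
    · rw [Finset.coe_image]
      exact ((hinv.iterate p.2).mono_left (hAE.trans hE)).image_subset
    · rw [Finset.coe_image]
      exact hsep.image_iterate hAp
  calc (E.card : ℝ) ≤ ∑ p ∈ F, ((A p).card : ℝ) := by
        exact_mod_cast (Finset.card_le_card hcover).trans Finset.card_biUnion_le
    _ ≤ ∑ p ∈ F, b p := Finset.sum_le_sum hpiece

theorem IsBowenSeparated.card_le_exp (hinv : MapsTo T Z Z) (hε : 0 ≤ ε) (hs : 0 ≤ s)
    {F : Finset (X × ℕ)} (hF : Z ⊆ ⋃ p ∈ F, bowenBall T p.2 p.1 (ε / 2))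
    (hpos : ∀ p ∈ F, 1 ≤ p.2) (hm : ∀ p ∈ F, p.2 ≤ m)
    (hsum : ∑ p ∈ F, Real.exp (-s * p.2) ≤ 1) {E : Finset X} (hE : ↑E ⊆ Z)
    (h : IsBowenSeparated T n ε E) : (E.card : ℝ) ≤ Real.exp (s * (n + m)) := by
  induction n using Nat.strong_induction_on generalizing E with
  | _ n ih =>
    calc (E.card : ℝ) ≤ ∑ p ∈ F, Real.exp (s * (n + m)) * Real.exp (-s * p.2) := by
          refine h.card_le_sum_of_cover hinv hε hF (fun p hp E' hE' hsep => ?_) hE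
          rw [← Real.exp_add]
          rcases lt_or_ge p.2 n with hpn | hnp
          · refine (ih (n - p.2) (Nat.sub_lt_self (hpos p hp) hpn.le) hE' hsep).trans_eq ?_
            rw [Nat.cast_sub hpn.le]
            ring_nf
          · rw [Nat.sub_eq_zero_of_le hnp] at hsep
            have hpm : (p.2 : ℝ) ≤ m := Nat.cast_le.2 (hm p hp)
            have hexponent : 0 ≤ s * (n + m) + -s * p.2 := by
              nlinarith [mul_nonneg hs (sub_nonneg.2 hpm), mul_nonneg hs n.cast_nonneg]
            calc (E'.card : ℝ) ≤ 1 := mod_cast Finset.card_le_one.2 hsep.subsingleton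
              _ ≤ _ := Real.one_le_exp hexponent
      _ = Real.exp (s * (n + m)) * ∑ p ∈ F, Real.exp (-s * p.2) := (Finset.mul_sum ..).symm
      _ ≤ Real.exp (s * (n + m)) := mul_le_of_le_one_right (Real.exp_pos _).le hsum

theorem upperCapacityEntropy_le_bowenEntropy (hT : ContinuousOn T Z) (hinv : MapsTo T Z Z)
    (hZ : IsCompact Z) : upperCapacityEntropy T Z ≤ bowenEntropy T Z := by
  refine le_iInf₂ fun s hs => iSup₂_le fun ε hε => ?_
  obtain ⟨F, hpos, hF, hsum⟩ :=
    exists_finset_cover_of_coverMeasure_eq_zero hT hinv hZ hs (half_pos hε) 1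
  have hm : ∀ p ∈ F, p.2 ≤ F.sup Prod.snd := fun p hp => Finset.le_sup (f := Prod.snd) hp
  refine expGrowthRate_le_of_eventually_le_exp (c := s * (F.sup Prod.snd : ℕ))
    (.of_forall fun n => ?_)
  rw [← mul_add]
  exact maxSep_le_of_forall_card_le fun E hE hsep =>
    hsep.card_le_exp hinv hε.le s.2 hF hpos hm hsum hE

end UpperCapacityLeBowen

theorem entropies_eq_of_invariant_compact_general (hT : ContinuousOn T Z)
    (hinv : MapsTo T Z Z) (hZ : IsCompact Z) :
    bowenEntropy T Z = packingEntropy T Z ∧ packingEntropy T Z = upperCapacityEntropy T Z := by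
  have hBP : bowenEntropy T Z ≤ packingEntropy T Z := bowenEntropy_le_packingEntropy T Z
  have hPU : packingEntropy T Z ≤ upperCapacityEntropy T Z :=
    packingEntropy_le_upperCapacityEntropy (bowenTotallyBounded_of_isCompact hT hinv hZ)
  have hUB : upperCapacityEntropy T Z ≤ bowenEntropy T Z :=
    upperCapacityEntropy_le_bowenEntropy hT hinv hZ
  exact ⟨hBP.antisymm (hPU.trans hUB), hPU.antisymm (hUB.trans hBP)⟩

end BowenProduct

/-- If `Z` is `T`-invariant and compact, then `h^B(Z) = h^P(Z) = h^U(Z)`. -/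
theorem BowenProduct.entropies_eq_of_invariant_compact {X : Type*} [MetricSpace X]
    [CompactSpace X] (T : X → X) (hT : Continuous T) (Z : Set X)
    (hinv : Set.MapsTo T Z Z) (hcomp : IsCompact Z) :
    BowenProduct.bowenEntropy T Z = BowenProduct.packingEntropy T Z ∧
    BowenProduct.packingEntropy T Z = BowenProduct.upperCapacityEntropy T Z :=
  BowenProduct.entropies_eq_of_invariant_compact_general hT.continuousOn hinv hcomp
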